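/- Let t > 0, λ > 0, η₁ > 1, η₂ > 0, p, q > 0 with p + q = 1, and let U be a probability density on (0,∞) such that U(x) = B₁·x^{−A₃}·exp{A₂·√(log x)}·(log x)^{κ}·(1 + O((log x)^{−1/2})) as x → ∞ and U(x) = B̃₁·x^{Ã₃}·exp{Ã₂·√(log(1/x))}·(log(1/x))^{κ}·(1 + O((log(1/x))^{−1/2})) as x → 0, where B₁, B̃₁ > 0, A₂, Ã₂ ∈ ℝ, κ ∈ ℝ, A₃ > 2, and Ã₃ > η₂ − 1. Define D(x) = e^{−λt}·U(x) + (U ⋆_M H(t,·))(x) for x > 0. Then D(x) = (1/(2√π))·m_{−η₂}(U)·(η₂λtq)^{1/4}·exp{η₁λtp/(η₁+η₂) − λt}·(log(1/x))^{−3/4}·exp{2√(η₂λtq)·√(log(1/x))}·x^{η₂−1}·(1 + O((log(1/x))^{−1/2})) as x → 0, where m_{−η₂}(U) = ∫_0^∞ x^{−η₂} U(x) dx < ∞. -/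

import Mathlib

open Filter Asymptotics MeasureTheory

/-- `P_{n,k}` from Kou's double exponential jump model: `P_{n,n} = p^n` and, for
`1 ≤ k ≤ n−1`,
`P_{n,k} = Σ_{i=k}^{n−1} C(n−k−1, i−k) C(n,i) (η₁/(η₁+η₂))^{i−k} (η₂/(η₁+η₂))^{n−i} p^i q^{n−i}`. -/
noncomputable def Pcoef (η₁ η₂ p q : ℝ) (n k : ℕ) : ℝ :=
  if k = n then p ^ n
  else ∑ i ∈ Finset.Ico k n,
    ((n - k - 1).choose (i - k) : ℝ) * (n.choose i : ℝ) *
      (η₁ / (η₁ + η₂)) ^ (i - k) * (η₂ / (η₁ + η₂)) ^ (n - i) * p ^ i * q ^ (n - i)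

/-- `Q_{n,k}` from Kou's double exponential jump model: `Q_{n,n} = q^n` and, for
`1 ≤ k ≤ n−1`,
`Q_{n,k} = Σ_{i=k}^{n−1} C(n−k−1, i−k) C(n,i) (η₁/(η₁+η₂))^{n−i} (η₂/(η₁+η₂))^{i−k} p^{n−i} q^i`. -/
noncomputable def Qcoef (η₁ η₂ p q : ℝ) (n k : ℕ) : ℝ :=
  if k = n then q ^ n
  else ∑ i ∈ Finset.Ico k n,
    ((n - k - 1).choose (i - k) : ℝ) * (n.choose i : ℝ) *
      (η₁ / (η₁ + η₂)) ^ (n - i) * (η₂ / (η₁ + η₂)) ^ (i - k) * p ^ (n - i) * q ^ i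

/-- The Poisson weights `π_n = e^{−λt} (λt)^n / n!`. -/
noncomputable def poisCoef (lam t : ℝ) (n : ℕ) : ℝ :=
  Real.exp (-(lam * t)) * (lam * t) ^ n / (n.factorial : ℝ)

/-- `a_k = (η₁^{k+1}/k!) Σ_{n=k+1}^∞ π_n P_{n,k+1}` (the series is reindexed by
`n = m + (k+1)`, `m ≥ 0`). -/
noncomputable def aCoef (lam t η₁ η₂ p q : ℝ) (k : ℕ) : ℝ :=
  η₁ ^ (k + 1) / (k.factorial : ℝ) *
    ∑' m : ℕ, poisCoef lam t (m + (k + 1)) * Pcoef η₁ η₂ p q (m + (k + 1)) (k + 1)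

/-- `b_k = (η₂^{k+1}/k!) Σ_{n=k+1}^∞ π_n Q_{n,k+1}` (the series is reindexed by
`n = m + (k+1)`, `m ≥ 0`). -/
noncomputable def bCoef (lam t η₁ η₂ p q : ℝ) (k : ℕ) : ℝ :=
  η₂ ^ (k + 1) / (k.factorial : ℝ) *
    ∑' m : ℕ, poisCoef lam t (m + (k + 1)) * Qcoef η₁ η₂ p q (m + (k + 1)) (k + 1)

/-- `G₁(t,u) = Σ_{k=0}^∞ a_k u^k`. -/
noncomputable def G1 (lam t η₁ η₂ p q : ℝ) (u : ℝ) : ℝ :=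
  ∑' k : ℕ, aCoef lam t η₁ η₂ p q k * u ^ k

/-- `G₂(t,−u) = Σ_{k=0}^∞ b_k u^k`; `G2m lam t η₁ η₂ p q u` stands for `G₂(t,−u)`. -/
noncomputable def G2m (lam t η₁ η₂ p q : ℝ) (u : ℝ) : ℝ :=
  ∑' k : ℕ, bCoef lam t η₁ η₂ p q k * u ^ k

/-- `H₁(t,x) = G₁(t, log x)` for `x > 1`. -/
noncomputable def H1fun (lam t η₁ η₂ p q : ℝ) (x : ℝ) : ℝ :=
  G1 lam t η₁ η₂ p q (Real.log x)

/-- `H₂(t,x) = G₂(t, log x) = G2m(t, log(1/x))` for `0 < x < 1`. -/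
noncomputable def H2fun (lam t η₁ η₂ p q : ℝ) (x : ℝ) : ℝ :=
  G2m lam t η₁ η₂ p q (Real.log x⁻¹)

/-- The density of the absolutely continuous part of the law of the exponential compound
Poisson factor: `H(t,x) = H₁(t,x) x^{−η₁−1}` for `x > 1` and `H(t,x) = H₂(t,x) x^{η₂−1}`
for `0 < x < 1`. -/
noncomputable def Hfun (lam t η₁ η₂ p q : ℝ) (x : ℝ) : ℝ :=
  if 1 < x then H1fun lam t η₁ η₂ p q x * x ^ (-η₁ - 1)
  else H2fun lam t η₁ η₂ p q x * x ^ (η₂ - 1)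

/-- The Mellin convolution of two measurable functions on `(0,∞)`:
`f ⋆_M g (x) = ∫_0^∞ f(x/t) g(t) dt/t`. -/
noncomputable def mellinConv (f g : ℝ → ℝ) (x : ℝ) : ℝ :=
  ∫ t in Set.Ioi (0:ℝ), f (x / t) * g t / t

/-!
In the coordinate `u = log (1 / x)` the Mellin convolution with `H` becomes an additive
convolution, against the measure `y ^ (-η₂) * U y`, with a kernel equal to `∑ b_k u ^ k` for
`u ≥ 0` and bounded for `u < 0`. Up to relative order `1 / k` one has
`b_k ≈ A c ^ k / (k! (k + 1)!)` with `c = η₂ λ t q`, so the kernel is asymptotic to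
`A I₁(2 √(c u)) / √(c u)`, where `I₁` is a modified Bessel function, with an error smaller by the
factor `√u`. Replacing `log (1 / x) + log y` by `log (1 / x)` in the kernel costs the same factor
times `exp (ε |log y|)`, which is integrable because `U` decays fast enough at zero; what remains is
the kernel at `log (1 / x)` times the moment. The summand `e ^ (-λ t) U x` is smaller by a power
of `x`.
-/

section

open Real Set Topology
open scoped Nat

/-! ### Bessel–Clifford functions -/

theorem norm_tsum_sub_le_of_norm_sub_le {ι E : Type*} [NormedAddCommGroup E] [CompleteSpace E]
    {f f₀ : ι → E} {e : ι → ℝ} {a : E} {b : ℝ} (hf₀ : HasSum f₀ a) (he : HasSum e b)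
    (h : ∀ i, ‖f i - f₀ i‖ ≤ e i) : ‖∑' i, f i - a‖ ≤ b := by
  have hf : Summable f := by
    simpa using (Summable.of_norm_bounded he.summable h).add hf₀.summable
  exact (hf.hasSum.sub hf₀).norm_le_of_bounded he h

theorem hasSum_pow_div_factorial (x : ℝ) : HasSum (fun k : ℕ ↦ x ^ k / (k ! : ℝ)) (exp x) := by
  simpa [exp_eq_exp_ℝ] using NormedSpace.expSeries_div_hasSum_exp x

/-- The Bessel–Clifford function of order `j`, which is `x ^ (-j / 2) * I_j (2 * √x)` for the
modified Bessel function `I_j` of the first kind. -/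
noncomputable def besselClifford (j : ℕ) (x : ℝ) : ℝ :=
  ∑' k : ℕ, x ^ k / (k ! * (k + j)!)

theorem summable_besselClifford (j : ℕ) (x : ℝ) :
    Summable fun k : ℕ ↦ x ^ k / (k ! * (k + j)! : ℝ) := by
  refine .of_norm_bounded (summable_pow_div_factorial |x|) fun k ↦ ?_
  have hfact : (1 : ℝ) ≤ (k + j)! := mod_cast (k + j).factorial_pos
  rw [norm_div, norm_pow, norm_eq_abs, norm_of_nonneg (by positivity)]
  gcongr
  exact le_mul_of_one_le_right (by positivity) hfact

theorem hasSum_besselClifford (j : ℕ) (x : ℝ) :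
    HasSum (fun k : ℕ ↦ x ^ k / (k ! * (k + j)! : ℝ)) (besselClifford j x) :=
  (summable_besselClifford j x).hasSum

theorem inv_factorial_le_besselClifford (j : ℕ) {x : ℝ} (hx : 0 ≤ x) :
    (j ! : ℝ)⁻¹ ≤ besselClifford j x := by
  simpa using le_hasSum (hasSum_besselClifford j x) 0 fun k _ ↦ by positivity

theorem sqrt_mul_besselClifford_succ_le (j : ℕ) {x : ℝ} (hx : 0 ≤ x) :
    √x * besselClifford (j + 1) x ≤ besselClifford j x := by
  have hsum := hasSum_besselClifford j x
  have hshift := (hasSum_nat_add_iff' 1).2 hsum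
  have hle := hasSum_le (fun k ↦ ?_) ((hasSum_besselClifford (j + 1) x).mul_left √x)
    ((hsum.add hshift).mul_left (1 / 2))
  · have hhead : 0 ≤ ∑ i ∈ Finset.range 1, x ^ i / (i ! * (i + j)! : ℝ) :=
      Finset.sum_nonneg fun i _ ↦ by positivity
    linarith
  -- The geometric mean of consecutive terms of order `j` dominates the term of order `j + 1`.
  · have hamgm : √x / (k + j + 1) ≤ 1 / 2 * (1 + x / ((k + 1) * (k + j + 1))) := by
      have hj : (0 : ℝ) ≤ (k + 1) * j := by positivity
      rw [div_le_iff₀ (by positivity)]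
      field_simp
      nlinarith [sq_nonneg (√x - (k + 1)), sq_sqrt hx]
    calc √x * (x ^ k / (k ! * (k + (j + 1))!))
        = x ^ k / (k ! * (k + j)!) * (√x / (k + j + 1)) := by
          rw [← add_assoc, Nat.factorial_succ (k + j)]
          push_cast
          field_simp
      _ ≤ x ^ k / (k ! * (k + j)!) * (1 / 2 * (1 + x / ((k + 1) * (k + j + 1)))) := by gcongr
      _ = 1 / 2 * (x ^ k / (k ! * (k + j)!) + x ^ (k + 1) / ((k + 1)! * (k + 1 + j)!)) := by
          rw [add_right_comm k 1 j, Nat.factorial_succ k, Nat.factorial_succ (k + j)]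
          push_cast
          field_simp
          ring

theorem besselClifford_mul_le_exp_mul_exp (j : ℕ) {a b : ℝ} (ha : 0 ≤ a) (hb : 0 ≤ b) :
    besselClifford j (a * b) ≤ exp a * exp b := by
  refine hasSum_le (fun k ↦ ?_) (hasSum_besselClifford j (a * b))
    ((hasSum_pow_div_factorial a).mul_right (exp b))
  calc (a * b) ^ k / (k ! * (k + j)!) = a ^ k / k ! * (b ^ k / (k + j)!) := by
        rw [mul_pow]; field_simp
    _ ≤ a ^ k / k ! * (b ^ k / k !) := by gcongr; omega
    _ ≤ a ^ k / k ! * exp b := by gcongr; exact pow_div_factorial_le_exp b hb k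

theorem integral_cos_pow_even_zero_pi (k : ℕ) :
    ∫ θ in 0..π, cos θ ^ (2 * k) = π * (2 * k)! / (4 ^ k * (k ! : ℝ) ^ 2) := by
  induction k with
  | zero => simp
  | succ k ih =>
    rw [mul_add_one, integral_cos_pow, ih]
    simp only [sin_pi, sin_zero, Nat.factorial_succ]
    push_cast
    field_simp
    ring

theorem integral_cos_pow_odd_zero_pi (k : ℕ) : ∫ θ in 0..π, cos θ ^ (2 * k + 1) = 0 := by
  induction k with
  | zero => simp
  | succ k ih =>
    rw [mul_add_one, add_right_comm, integral_cos_pow, ih]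
    simp

theorem integral_cos_pow_mul_sin_sq_zero_pi (n : ℕ) :
    ∫ θ in 0..π, cos θ ^ n * sin θ ^ 2 = (∫ θ in 0..π, cos θ ^ n) / (n + 2) := by
  have hsplit (θ : ℝ) : cos θ ^ n * sin θ ^ 2 = cos θ ^ n - cos θ ^ (n + 2) := by
    rw [sin_sq]; ring
  have hint (m : ℕ) : IntervalIntegrable (fun θ ↦ cos θ ^ m) volume 0 π :=
    (by fun_prop : Continuous fun θ ↦ cos θ ^ m).intervalIntegrable 0 π
  simp_rw [hsplit]
  rw [intervalIntegral.integral_sub (hint n) (hint (n + 2)), integral_cos_pow]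
  simp only [sin_pi, sin_zero]
  field_simp
  ring

theorem hasSum_integral_exp_mul_cos_mul_sin_sq (z : ℝ) :
    HasSum (fun n : ℕ ↦ z ^ n / n ! * ∫ θ in 0..π, cos θ ^ n * sin θ ^ 2)
      (∫ θ in 0..π, exp (z * cos θ) * sin θ ^ 2) := by
  simp_rw [← intervalIntegral.integral_const_mul]
  refine intervalIntegral.hasSum_integral_of_dominated_convergence
    (fun n _ ↦ |z| ^ n / n !) (fun n ↦ ?_) (fun n ↦ .of_forall fun θ _ ↦ ?_)
    (.of_forall fun θ _ ↦ summable_pow_div_factorial |z|) intervalIntegrable_const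
    (.of_forall fun θ _ ↦ ?_)
  · exact Continuous.aestronglyMeasurable (by fun_prop)
  · have hcos : |cos θ| ^ n ≤ 1 := pow_le_one₀ (abs_nonneg _) (abs_cos_le_one θ)
    have hsin : |sin θ| ^ 2 ≤ 1 := pow_le_one₀ (abs_nonneg _) (abs_sin_le_one θ)
    simp only [norm_mul, norm_div, norm_pow, norm_eq_abs, Nat.abs_cast]
    exact mul_le_of_le_one_right (by positivity) (mul_le_one₀ hcos (by positivity) hsin)
  · exact ((hasSum_pow_div_factorial (z * cos θ)).mul_right (sin θ ^ 2)).congr_fun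
      fun n ↦ by rw [mul_pow]; ring

theorem integral_exp_mul_cos_mul_sin_sq (z : ℝ) :
    ∫ θ in 0..π, exp (z * cos θ) * sin θ ^ 2 = π / 2 * besselClifford 1 (z ^ 2 / 4) := by
  refine (hasSum_integral_exp_mul_cos_mul_sin_sq z).unique ?_
  rw [← add_zero (π / 2 * _)]
  refine HasSum.even_add_odd ?_ ?_
  · refine ((hasSum_besselClifford 1 (z ^ 2 / 4)).mul_left (π / 2)).congr_fun fun k ↦ ?_
    rw [integral_cos_pow_mul_sin_sq_zero_pi, integral_cos_pow_even_zero_pi, div_pow, ← pow_mul,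
      Nat.factorial_succ k]
    push_cast
    field_simp
  · simp [integral_cos_pow_mul_sin_sq_zero_pi, integral_cos_pow_odd_zero_pi]

theorem integral_comp_one_sub_cos_mul_sin {g : ℝ → ℝ} (hg : Continuous g) :
    ∫ θ in 0..π, g (1 - cos θ) * sin θ = ∫ r in 0..2, g r := by
  have h := intervalIntegral.integral_comp_mul_deriv (a := 0) (b := π)
    (fun θ _ ↦ by simpa using (hasDerivAt_cos θ).const_sub 1) continuous_sin.continuousOn hg
  simpa [Function.comp_def, show (1 : ℝ) + 1 = 2 by norm_num] using h

-- Substitute `r = 1 - cos θ`, so that `sin θ = √r * √(2 - r)`.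
theorem integral_sqrt_mul_exp_neg_mul_mul_sqrt_two_sub (z : ℝ) :
    ∫ r in Ioi 0, √r * exp (-(z * r)) * √(2 - r) =
      exp (-z) * (π / 2 * besselClifford 1 (z ^ 2 / 4)) := by
  have hsubst : ∫ θ in 0..π, exp (z * cos θ) * sin θ ^ 2 =
      ∫ r in 0..2, exp (z * (1 - r)) * (√r * √(2 - r)) := by
    rw [← integral_comp_one_sub_cos_mul_sin (by fun_prop)]
    refine intervalIntegral.integral_congr fun θ hθ ↦ ?_
    rw [uIcc_of_le pi_pos.le] at hθ
    have hsin : √(1 - cos θ) * √(2 - (1 - cos θ)) = sin θ := by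
      rw [← sqrt_mul (by linarith [cos_le_one θ]), ← sqrt_sq (sin_nonneg_of_mem_Icc hθ), sin_sq]
      ring_nf
    simp only [hsin, sub_sub_cancel]
    ring
  rw [← integral_exp_mul_cos_mul_sin_sq, hsubst, intervalIntegral.integral_of_le zero_le_two,
    ← integral_const_mul, ← Ioc_union_Ioi_eq_Ioi (zero_le_two : (0 : ℝ) ≤ 2),
    integral_union_eq_left_of_forall measurableSet_Ioi fun r hr ↦ ?_]
  · congr! 2
    rw [← mul_assoc (exp (-z)), ← exp_add]
    ring_nf
  · simp [sqrt_eq_zero_of_nonpos (sub_nonpos.2 (mem_Ioi.1 hr).le)]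

/-! ### Asymptotics of the Bessel–Clifford function of order one -/

theorem integrableOn_rpow_mul_exp_neg_mul_Ioi {s z : ℝ} (hs : 0 < s) (hz : 0 < z) :
    IntegrableOn (fun r ↦ r ^ (s - 1) * exp (-(z * r))) (Ioi 0) := by
  simpa using integrableOn_rpow_mul_exp_neg_mul_rpow (by linarith : -1 < s - 1) one_pos hz

theorem abs_integral_rpow_mul_exp_neg_mul_sub_le {g : ℝ → ℝ} {g₀ K s z : ℝ} (hg : Measurable g)
    (hs : 0 < s) (hz : 0 < z) (hgK : ∀ r, 0 < r → |g r - g₀| ≤ K * r) :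
    |(∫ r in Ioi 0, r ^ (s - 1) * exp (-(z * r)) * g r) - (1 / z) ^ s * Gamma s * g₀| ≤
      K * ((1 / z) ^ (s + 1) * Gamma (s + 1)) := by
  have hmain := integrableOn_rpow_mul_exp_neg_mul_Ioi hs hz
  have herr := (integrableOn_rpow_mul_exp_neg_mul_Ioi (by linarith : 0 < s + 1) hz).const_mul K
  have hbound : ∀ᵐ r ∂volume.restrict (Ioi 0), ‖r ^ (s - 1) * exp (-(z * r)) * (g r - g₀)‖ ≤
      K * (r ^ (s + 1 - 1) * exp (-(z * r))) := by
    refine (ae_restrict_iff' measurableSet_Ioi).2 (.of_forall fun r (hr : 0 < r) ↦ ?_)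
    rw [norm_mul, norm_of_nonneg (by positivity), norm_eq_abs, add_sub_right_comm,
      rpow_add_one hr.ne']
    calc r ^ (s - 1) * exp (-(z * r)) * |g r - g₀|
        ≤ r ^ (s - 1) * exp (-(z * r)) * (K * r) := by gcongr; exact hgK r hr
      _ = K * (r ^ (s - 1) * r * exp (-(z * r))) := by ring
  have hdiff : IntegrableOn (fun r ↦ r ^ (s - 1) * exp (-(z * r)) * (g r - g₀)) (Ioi 0) :=
    Integrable.mono' herr (by fun_prop) hbound
  have hint : IntegrableOn (fun r ↦ r ^ (s - 1) * exp (-(z * r)) * g r) (Ioi 0) :=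
    (hdiff.add (hmain.mul_const g₀)).congr (.of_forall fun r ↦ by simp only [Pi.add_apply]; ring)
  have hnorm := norm_integral_le_of_norm_le herr hbound
  simp_rw [mul_sub] at hnorm
  rwa [integral_sub hint (hmain.mul_const g₀), integral_mul_const, integral_const_mul,
    integral_rpow_mul_exp_neg_mul_Ioi hs hz, integral_rpow_mul_exp_neg_mul_Ioi (by linarith) hz]
    at hnorm

theorem abs_sqrt_sub_sub_sqrt_le {a r : ℝ} (ha : 0 < a) (hr : 0 ≤ r) :
    |√(a - r) - √a| ≤ 1 / √a * r := by
  have hle : √(a - r) ≤ √a := sqrt_le_sqrt (by linarith)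
  have hmul : a - r ≤ √(a - r) * √a := by
    rcases le_total r a with h | h
    · nlinarith [mul_self_sqrt (sub_nonneg.2 h), sqrt_nonneg (a - r)]
    · exact (sub_nonpos.2 h).trans (by positivity)
  rw [abs_sub_comm, abs_of_nonneg (by linarith), one_div_mul_eq_div, le_div_iff₀ (by positivity)]
  nlinarith [mul_self_sqrt ha.le]

/-- The leading term of `besselClifford 1 x` as `x → ∞`. -/
noncomputable def besselCliffordLead (x : ℝ) : ℝ :=
  x ^ (-(3 : ℝ) / 4) * exp (2 * √x) / (2 * √π)

theorem besselCliffordLead_pos {x : ℝ} (hx : 0 < x) : 0 < besselCliffordLead x := by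
  unfold besselCliffordLead
  positivity

theorem besselCliffordLead_eq {x : ℝ} (hx : 0 < x) :
    besselCliffordLead x =
      2 * exp (2 * √x) / π * ((1 / (2 * √x)) ^ (3 / 2 : ℝ) * Gamma (3 / 2) * √2) := by
  have hs : 0 < √x := by positivity
  have hx34 : x ^ (-(3 : ℝ) / 4) = ((√x) ^ (3 / 2 : ℝ))⁻¹ := by
    rw [sqrt_eq_rpow, ← rpow_mul hx.le, ← rpow_neg hx.le]
    norm_num
  have h2 : (2 : ℝ) ^ (3 / 2 : ℝ) = 2 * √2 := by
    rw [sqrt_eq_rpow, ← rpow_one_add' (by norm_num) (by norm_num)]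
    norm_num
  have hGamma : Gamma (3 / 2) = √π / 2 := by
    rw [show (3 / 2 : ℝ) = 1 / 2 + 1 by norm_num, Gamma_add_one (by norm_num), Gamma_one_half_eq]
    ring
  rw [besselCliffordLead, hx34, one_div, inv_rpow (by positivity), mul_rpow two_pos.le hs.le, h2,
    hGamma]
  field_simp
  rw [sq_sqrt pi_pos.le]

theorem abs_besselClifford_one_sub_lead_le {x : ℝ} (hx : 0 < x) :
    |besselClifford 1 x - besselCliffordLead x| ≤ besselCliffordLead x / √x := by
  have hz : 0 < 2 * √x := by positivity
  have hwatson := abs_integral_rpow_mul_exp_neg_mul_sub_le (s := 3 / 2) (by fun_prop)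
    (by norm_num) hz fun r hr ↦ abs_sqrt_sub_sub_sqrt_le two_pos hr.le
  have hsq : (2 * √x) ^ 2 / 4 = x := by rw [mul_pow, sq_sqrt hx.le]; ring
  have herr : 1 / √2 * ((1 / (2 * √x)) ^ (3 / 2 + 1 : ℝ) * Gamma (3 / 2 + 1)) =
      3 / (8 * √x) * ((1 / (2 * √x)) ^ (3 / 2 : ℝ) * Gamma (3 / 2) * √2) := by
    rw [rpow_add_one (by positivity), Gamma_add_one (by norm_num)]
    field_simp
    norm_num
  rw [herr, show (3 / 2 - 1 : ℝ) = 1 / 2 by norm_num] at hwatson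
  simp_rw [← sqrt_eq_rpow] at hwatson
  rw [integral_sqrt_mul_exp_neg_mul_mul_sqrt_two_sub, hsq] at hwatson
  have hscale : besselClifford 1 x - besselCliffordLead x = 2 * exp (2 * √x) / π *
      (exp (-(2 * √x)) * (π / 2 * besselClifford 1 x) -
        (1 / (2 * √x)) ^ (3 / 2 : ℝ) * Gamma (3 / 2) * √2) := by
    rw [besselCliffordLead_eq hx, exp_neg]
    field_simp
  calc |besselClifford 1 x - besselCliffordLead x|
      ≤ 2 * exp (2 * √x) / π *
          (3 / (8 * √x) * ((1 / (2 * √x)) ^ (3 / 2 : ℝ) * Gamma (3 / 2) * √2)) := by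
        rw [hscale, abs_mul, abs_of_pos (by positivity)]
        gcongr
    _ = 3 / 8 * (besselCliffordLead x / √x) := by rw [besselCliffordLead_eq hx]; field_simp
    _ ≤ besselCliffordLead x / √x :=
        mul_le_of_le_one_left (by have := besselCliffordLead_pos hx; positivity) (by norm_num)

theorem besselClifford_one_le_mul_lead {c x : ℝ} (hc : 0 < c) (hx : c ≤ x) :
    besselClifford 1 x ≤ (1 + 1 / √c) * besselCliffordLead x := by
  have hx0 := hc.trans_le hx
  have hlead := besselCliffordLead_pos hx0
  calc besselClifford 1 x ≤ besselCliffordLead x + besselCliffordLead x / √x :=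
        sub_le_iff_le_add'.1 (abs_le.1 (abs_besselClifford_one_sub_lead_le hx0)).2
    _ ≤ besselCliffordLead x + besselCliffordLead x / √c := by gcongr
    _ = (1 + 1 / √c) * besselCliffordLead x := by ring

theorem besselCliffordLead_add_le {x y : ℝ} (hx : 0 < x) (hy : 0 ≤ y) :
    besselCliffordLead (x + y) ≤ besselCliffordLead x * exp (2 * √y) := by
  have hpow : (x + y) ^ (-(3 : ℝ) / 4) ≤ x ^ (-(3 : ℝ) / 4) :=
    rpow_le_rpow_of_nonpos hx (by linarith) (by norm_num)
  have hsqrt : √(x + y) ≤ √x + √y := by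
    simpa only [sqrt_eq_rpow] using rpow_add_le_add_rpow hx.le hy (by norm_num) (by norm_num)
  rw [besselCliffordLead, besselCliffordLead, div_mul_eq_mul_div, mul_assoc, ← exp_add, ← mul_add]
  gcongr

/-! ### Perturbed Bessel–Clifford series -/

/-- The coefficients `b k` differ from those of `A * besselClifford 1 (c * u)` by at most those of
`B * besselClifford 2 (c * u)`, which is smaller by the factor `√u` as `u → ∞`. -/
def IsBesselCliffordPerturbation (A B c : ℝ) (b : ℕ → ℝ) : Prop :=
  ∀ k, |b k - A * (c ^ k / (k ! * (k + 1)!))| ≤ B * (c ^ k / (k ! * (k + 2)!))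

namespace IsBesselCliffordPerturbation

variable {A B c : ℝ} {b : ℕ → ℝ}

theorem nonneg (hb : IsBesselCliffordPerturbation A B c b) : 0 ≤ B :=
  nonneg_of_mul_nonneg_left ((abs_nonneg _).trans (hb 0)) (by positivity)

theorem abs_tsum_sub_le (hb : IsBesselCliffordPerturbation A B c b) {u : ℝ} (hu : 0 ≤ u) :
    |∑' k, b k * u ^ k - A * besselClifford 1 (c * u)| ≤ B * besselClifford 2 (c * u) := by
  refine norm_tsum_sub_le_of_norm_sub_le ((hasSum_besselClifford 1 (c * u)).mul_left A)
    ((hasSum_besselClifford 2 (c * u)).mul_left B) fun k ↦ ?_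
  calc ‖b k * u ^ k - A * ((c * u) ^ k / (k ! * (k + 1)!))‖
      = ‖(b k - A * (c ^ k / (k ! * (k + 1)!))) * u ^ k‖ := by rw [mul_pow]; ring_nf
    _ = |b k - A * (c ^ k / (k ! * (k + 1)!))| * u ^ k := by
        rw [norm_mul, norm_pow, norm_of_nonneg hu, norm_eq_abs]
    _ ≤ B * (c ^ k / (k ! * (k + 2)!)) * u ^ k := by gcongr; exact hb k
    _ = B * ((c * u) ^ k / (k ! * (k + 2)!)) := by rw [mul_pow]; ring

theorem abs_coeff_le (hb : IsBesselCliffordPerturbation A B c b) (hc : 0 ≤ c) (k : ℕ) :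
    |b k| ≤ (|A| + B) * (c ^ k / (k ! * (k + 1)!)) := by
  have hB := hb.nonneg
  have hmain : |A * (c ^ k / (k ! * (k + 1)!))| = |A| * (c ^ k / (k ! * (k + 1)!)) := by
    rw [abs_mul, abs_of_nonneg (by positivity : 0 ≤ c ^ k / (k ! * (k + 1)! : ℝ))]
  calc |b k| ≤ |A * (c ^ k / (k ! * (k + 1)!))| + B * (c ^ k / (k ! * (k + 2)!)) :=
        sub_le_iff_le_add'.1 ((abs_sub_abs_le_abs_sub _ _).trans (hb k))
    _ ≤ |A| * (c ^ k / (k ! * (k + 1)!)) + B * (c ^ k / (k ! * (k + 1)!)) := by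
        rw [hmain]; gcongr; omega
    _ = (|A| + B) * (c ^ k / (k ! * (k + 1)!)) := by ring

theorem norm_term_le (hb : IsBesselCliffordPerturbation A B c b) (hc : 0 ≤ c) (u : ℝ) (k : ℕ) :
    ‖b k * u ^ k‖ ≤ (|A| + B) * ((c * |u|) ^ k / (k ! * (k + 1)!)) := by
  rw [norm_mul, norm_pow, norm_eq_abs, norm_eq_abs, mul_pow, mul_div_right_comm, ← mul_assoc]
  gcongr
  exact hb.abs_coeff_le hc k

theorem summable (hb : IsBesselCliffordPerturbation A B c b) (hc : 0 ≤ c) (u : ℝ) :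
    Summable fun k ↦ b k * u ^ k :=
  .of_norm_bounded ((summable_besselClifford 1 _).mul_left _) (hb.norm_term_le hc u)

theorem measurable_tsum (hb : IsBesselCliffordPerturbation A B c b) (hc : 0 ≤ c) :
    Measurable fun u ↦ ∑' k, b k * u ^ k :=
  measurable_of_tendsto_metrizable (f := fun n u ↦ ∑ k ∈ Finset.range n, b k * u ^ k)
    (fun n ↦ by fun_prop) (tendsto_pi_nhds.2 fun u ↦ (hb.summable hc u).hasSum.tendsto_sum_nat)

theorem abs_tsum_le (hb : IsBesselCliffordPerturbation A B c b) (hc : 0 ≤ c) (u : ℝ) :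
    |∑' k, b k * u ^ k| ≤ (|A| + B) * besselClifford 1 (c * |u|) :=
  tsum_of_norm_bounded ((hasSum_besselClifford 1 _).mul_left _) (hb.norm_term_le hc u)

theorem exists_abs_tsum_le_exp (hb : IsBesselCliffordPerturbation A B c b) (hc : 0 ≤ c) {δ : ℝ}
    (hδ : 0 < δ) : ∃ K, ∀ u, |∑' k, b k * u ^ k| ≤ K * exp (δ * |u|) := by
  have hB := hb.nonneg
  refine ⟨(|A| + B) * exp (c / δ), fun u ↦ (hb.abs_tsum_le hc u).trans ?_⟩
  rw [mul_assoc, show c * |u| = c / δ * (δ * |u|) by field_simp]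
  gcongr
  exact besselClifford_mul_le_exp_mul_exp 1 (by positivity) (by positivity)

-- The derivative of `besselClifford 1` is `besselClifford 2`.
theorem abs_tsum_sub_tsum_le (hb : IsBesselCliffordPerturbation A B c b) (hc : 0 ≤ c) {R u w : ℝ}
    (hu : |u| ≤ R) (hw : |w| ≤ R) :
    |∑' k, b k * u ^ k - ∑' k, b k * w ^ k| ≤
      (|A| + B) * (c * |u - w|) * besselClifford 2 (c * R) := by
  have hB := hb.nonneg
  have hR : 0 ≤ R := (abs_nonneg u).trans hu
  have hsum : HasSum
      (fun k : ℕ ↦ (|A| + B) * (c ^ k / (k ! * (k + 1)!)) * (|u - w| * k * R ^ (k - 1)))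
      ((|A| + B) * (c * |u - w|) * besselClifford 2 (c * R)) := by
    rw [← hasSum_nat_add_iff' 1]
    simp only [Finset.sum_range_one, Nat.cast_zero, mul_zero, zero_mul, sub_zero]
    refine ((hasSum_besselClifford 2 (c * R)).mul_left _).congr_fun fun k ↦ ?_
    rw [Nat.factorial_succ k, Nat.add_sub_cancel, mul_pow]
    push_cast
    field_simp
    ring
  refine norm_tsum_sub_le_of_norm_sub_le (hb.summable hc w).hasSum hsum fun k ↦ ?_
  have hpow : |u ^ k - w ^ k| ≤ |u - w| * k * R ^ (k - 1) :=
    (abs_pow_sub_pow_le u w k).trans (by gcongr; exact max_le hu hw)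
  rw [← mul_sub, norm_mul]
  exact mul_le_mul (hb.abs_coeff_le hc k) hpow (norm_nonneg _) (by positivity)

end IsBesselCliffordPerturbation

theorem besselClifford_two_le_mul_lead {c x : ℝ} (hc : 0 < c) (hx : c ≤ x) :
    besselClifford 2 x ≤ (1 + 1 / √c) * (besselCliffordLead x / √x) := by
  have hx0 := hc.trans_le hx
  rw [← mul_div_assoc, le_div_iff₀' (by positivity)]
  exact (sqrt_mul_besselClifford_succ_le 1 hx0.le).trans (besselClifford_one_le_mul_lead hc hx)

theorem two_mul_sqrt_mul_le_add {a b : ℝ} (ha : 0 ≤ a) (hb : 0 ≤ b) : 2 * √(a * b) ≤ a + b :=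
  two_mul_le_add_of_sq_le_mul ha hb (sq_sqrt (mul_nonneg ha hb)).le

theorem sqrt_le_exp_mul_abs_div {ε L v : ℝ} (hε : 0 < ε) (hL : 1 ≤ L) (hv : L + v < 0) :
    √L ≤ exp (ε * |v|) / ε := by
  have hLv : L ≤ |v| := by linarith [neg_le_abs v]
  rw [le_div_iff₀' hε]
  calc ε * √L ≤ ε * |v| := by
        gcongr
        exact (sqrt_le_self_iff.2 (.inr hL)).trans hLv
    _ ≤ exp (ε * |v|) := by linarith [add_one_le_exp (ε * |v|)]

theorem mul_exp_two_mul_sqrt_le {c ε s : ℝ} (hc : 0 ≤ c) (hε : 0 < ε) (hs : 0 ≤ s) :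
    s * exp (2 * √(c * s)) ≤ 2 / ε * exp (2 * c / ε) * exp (ε * s) := by
  have hlin : s ≤ 2 / ε * exp (ε / 2 * s) := by
    rw [div_mul_eq_mul_div, le_div_iff₀ hε]
    linarith [add_one_le_exp (ε / 2 * s)]
  have hsqrt : 2 * √(c * s) ≤ 2 * c / ε + ε / 2 * s := by
    have h := two_mul_sqrt_mul_le_add (by positivity : 0 ≤ 2 * c / ε)
      (by positivity : 0 ≤ ε / 2 * s)
    rwa [show 2 * c / ε * (ε / 2 * s) = c * s by field_simp] at h
  calc s * exp (2 * √(c * s))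
      ≤ 2 / ε * exp (ε / 2 * s) * exp (2 * c / ε + ε / 2 * s) := by gcongr
    _ = 2 / ε * exp (2 * c / ε) * exp (ε * s) := by
        rw [exp_add, show ε * s = ε / 2 * s + ε / 2 * s by ring, exp_add]
        ring

namespace IsBesselCliffordPerturbation

variable {A B c : ℝ} {b : ℕ → ℝ}

theorem exists_abs_tsum_sub_lead_le (hb : IsBesselCliffordPerturbation A B c b) (hc : 0 < c) :
    ∃ K, ∀ L, 1 ≤ L → |∑' k, b k * L ^ k - A * besselCliffordLead (c * L)| ≤
      K * (besselCliffordLead (c * L) / √L) := by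
  have hB := hb.nonneg
  refine ⟨(B * (1 + 1 / √c) + |A|) / √c, fun L hL ↦ ?_⟩
  have hcL : c ≤ c * L := le_mul_of_one_le_right hc.le hL
  have htail := besselClifford_two_le_mul_lead hc hcL
  have hlead := abs_besselClifford_one_sub_lead_le (hc.trans_le hcL)
  calc |∑' k, b k * L ^ k - A * besselCliffordLead (c * L)|
      ≤ |∑' k, b k * L ^ k - A * besselClifford 1 (c * L)| +
          |A * besselClifford 1 (c * L) - A * besselCliffordLead (c * L)| := abs_sub_le _ _ _
    _ ≤ B * besselClifford 2 (c * L) +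
          |A| * |besselClifford 1 (c * L) - besselCliffordLead (c * L)| := by
        rw [← mul_sub, abs_mul]
        gcongr
        exact hb.abs_tsum_sub_le (by positivity)
    _ ≤ B * ((1 + 1 / √c) * (besselCliffordLead (c * L) / √(c * L))) +
          |A| * (besselCliffordLead (c * L) / √(c * L)) := by gcongr
    _ = (B * (1 + 1 / √c) + |A|) / √c * (besselCliffordLead (c * L) / √L) := by
        rw [sqrt_mul hc.le]
        field_simp

theorem exists_abs_tsum_add_sub_le (hb : IsBesselCliffordPerturbation A B c b) (hc : 0 < c)
    {ε : ℝ} (hε : 0 < ε) :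
    ∃ K, ∀ L, 1 ≤ L → ∀ v, |∑' k, b k * (L + v) ^ k - ∑' k, b k * L ^ k| ≤
      K * (besselCliffordLead (c * L) / √L) * exp (ε * |v|) := by
  have hB := hb.nonneg
  refine ⟨(|A| + B) * √c * (1 + 1 / √c) * (2 / ε * exp (2 * c / ε)), fun L hL v ↦ ?_⟩
  have hL0 : 0 < L := by linarith
  have hR : L ≤ L + |v| := le_add_of_nonneg_right (abs_nonneg v)
  have hcR : c ≤ c * (L + |v|) := le_mul_of_one_le_right hc.le (hL.trans hR)
  have hlead := besselCliffordLead_pos (by positivity : 0 < c * L)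
  have htail : besselClifford 2 (c * (L + |v|)) ≤
      (1 + 1 / √c) * (besselCliffordLead (c * L) * exp (2 * √(c * |v|)) / √(c * L)) := by
    refine (besselClifford_two_le_mul_lead hc hcR).trans ?_
    gcongr
    rw [mul_add]
    exact besselCliffordLead_add_le (by positivity) (by positivity)
  calc |∑' k, b k * (L + v) ^ k - ∑' k, b k * L ^ k|
      ≤ (|A| + B) * (c * |L + v - L|) * besselClifford 2 (c * (L + |v|)) :=
        hb.abs_tsum_sub_tsum_le hc.le ((abs_add_le L v).trans_eq (by rw [abs_of_pos hL0]))
          ((abs_of_pos hL0).trans_le hR)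
    _ ≤ (|A| + B) * (c * |L + v - L|) *
          ((1 + 1 / √c) * (besselCliffordLead (c * L) * exp (2 * √(c * |v|)) / √(c * L))) := by
        gcongr
    _ = (|A| + B) * √c * (1 + 1 / √c) * (besselCliffordLead (c * L) / √L) *
          (|v| * exp (2 * √(c * |v|))) := by
        rw [add_sub_cancel_left, sqrt_mul hc.le L]
        nth_rw 1 [← mul_self_sqrt hc.le]
        field_simp
    _ ≤ (|A| + B) * √c * (1 + 1 / √c) * (besselCliffordLead (c * L) / √L) *
          (2 / ε * exp (2 * c / ε) * exp (ε * |v|)) :=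
        mul_le_mul_of_nonneg_left (mul_exp_two_mul_sqrt_le hc.le hε (abs_nonneg v)) (by positivity)
    _ = _ := by ring

theorem exists_abs_add_sub_le (hb : IsBesselCliffordPerturbation A B c b) (hc : 0 < c)
    {ε M : ℝ} (hε : 0 < ε) {k : ℝ → ℝ} (hk : ∀ u, 0 ≤ u → k u = ∑' n, b n * u ^ n)
    (hM : ∀ u, u < 0 → |k u| ≤ M) :
    ∃ K, ∀ L, 1 ≤ L → ∀ v,
      |k (L + v) - k L| ≤ K * (besselCliffordLead (c * L) / √L) * exp (ε * |v|) := by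
  have hB := hb.nonneg
  obtain ⟨K, hK⟩ := hb.exists_abs_tsum_add_sub_le hc hε
  refine ⟨max K ((M + (|A| + B)) * (1 + 1 / √c) / ε), fun L hL v ↦ ?_⟩
  have hL0 : 0 < L := by linarith
  have hlead := besselCliffordLead_pos (by positivity : 0 < c * L)
  obtain hv | hv := le_or_gt 0 (L + v)
  · rw [hk _ hv, hk L hL0.le]
    refine (hK L hL v).trans ?_
    gcongr
    exact le_max_left _ _
  -- For `L + v < 0` the weight `exp (ε * |v|)` supplies the factor `√L`.
  have hM0 : 0 ≤ M := (abs_nonneg _).trans (hM _ hv)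
  have hone : 1 ≤ besselClifford 1 (c * L) := by
    simpa using inv_factorial_le_besselClifford 1 (by positivity : 0 ≤ c * L)
  have hkL : |k L| ≤ (|A| + B) * besselClifford 1 (c * L) := by
    simpa only [hk L hL0.le, abs_of_pos hL0] using hb.abs_tsum_le hc.le L
  calc |k (L + v) - k L|
      ≤ M * 1 + (|A| + B) * besselClifford 1 (c * L) := by
        rw [mul_one]
        exact (abs_sub _ _).trans (add_le_add (hM _ hv) hkL)
    _ ≤ (M + (|A| + B)) * besselClifford 1 (c * L) := by
        rw [add_mul M]
        gcongr
    _ ≤ (M + (|A| + B)) * ((1 + 1 / √c) * besselCliffordLead (c * L)) := by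
        gcongr
        exact besselClifford_one_le_mul_lead hc (le_mul_of_one_le_right hc.le hL)
    _ = (M + (|A| + B)) * (1 + 1 / √c) * (besselCliffordLead (c * L) / √L) * √L := by
        field_simp
    _ ≤ (M + (|A| + B)) * (1 + 1 / √c) * (besselCliffordLead (c * L) / √L) *
          (exp (ε * |v|) / ε) := by
        gcongr
        exact sqrt_le_exp_mul_abs_div hε hL hv
    _ = (M + (|A| + B)) * (1 + 1 / √c) / ε * (besselCliffordLead (c * L) / √L) *
          exp (ε * |v|) := by ring
    _ ≤ _ := by
        gcongr
        exact le_max_right _ _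

end IsBesselCliffordPerturbation

/-! ### Coefficients of the jump density -/

theorem factorial_succ_mul_factorial_succ_le (k r : ℕ) : (k + 1)! * (r + 1)! ≤ (k + (r + 1))! := by
  induction r with
  | zero => simp
  | succ r ih =>
    calc (k + 1)! * (r + 1 + 1)! = (r + 1 + 1) * ((k + 1)! * (r + 1)!) := by
          rw [Nat.factorial_succ (r + 1)]; ring
      _ ≤ (k + (r + 1) + 1) * (k + (r + 1))! := Nat.mul_le_mul (by omega) ih
      _ = (k + (r + 1 + 1))! := rfl

-- The term of index `r` comes from `i = k + r` in `Qcoef`. For `m = 0` the truncated subtraction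
-- `m - 1 = 0` leaves the term `r = 0`, which is `q ^ k`; for `0 < m` the term `r = m` vanishes.
theorem poisCoef_mul_Qcoef (lam t η₁ η₂ p q : ℝ) (m k : ℕ) :
    poisCoef lam t (m + k) * Qcoef η₁ η₂ p q (m + k) k =
      exp (-(lam * t)) * (lam * t * q) ^ k *
        ∑ r ∈ Finset.range (m + 1), ((m - 1).choose r : ℝ) *
          ((lam * t * (η₁ / (η₁ + η₂) * p)) ^ (m - r) / (m - r)! *
            ((lam * t * (η₂ / (η₁ + η₂) * q)) ^ r / (k + r)!)) := by
  rcases m with _ | m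
  · simp [poisCoef, Qcoef, mul_pow]
    ring
  · rw [Finset.sum_range_succ, Nat.choose_eq_zero_of_lt (by omega : m + 1 - 1 < m + 1),
      Nat.cast_zero, zero_mul, add_zero, poisCoef, Qcoef, if_neg (by omega),
      Finset.sum_Ico_eq_sum_range, Nat.add_sub_cancel, Finset.mul_sum, Finset.mul_sum]
    refine Finset.sum_congr rfl fun r hr ↦ ?_
    obtain ⟨s, rfl⟩ : ∃ s, m = r + s := Nat.exists_eq_add_of_le (Finset.mem_range_succ_iff.1 hr)
    have hs : r + s + 1 - r = s + 1 := by omega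
    have hn : r + s + 1 + k - (k + r) = s + 1 := by omega
    rw [Nat.cast_choose ℝ (by omega : k + r ≤ r + s + 1 + k), hn, hs]
    simp only [Nat.add_sub_cancel_left, Nat.add_sub_cancel]
    field_simp
    ring

theorem sum_range_pow_div_factorial_mul (y w : ℝ) (m : ℕ) :
    ∑ r ∈ Finset.range (m + 1), y ^ (m - r) / (m - r)! * (w ^ r / r !) = (y + w) ^ m / m ! := by
  rw [add_comm y w, add_pow, Finset.sum_div]
  refine Finset.sum_congr rfl fun r hr ↦ ?_
  rw [Nat.cast_choose ℝ (Finset.mem_range_succ_iff.1 hr)]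
  field_simp

-- The term `r = 0` is the main one; in the others `(k + r)! ≥ (k + 1)! * r !`.
theorem abs_sum_choose_mul_sub_le {y w : ℝ} (hy : 0 ≤ y) (hw : 0 ≤ w) (m k : ℕ) :
    |∑ r ∈ Finset.range (m + 1), ((m - 1).choose r : ℝ) *
        (y ^ (m - r) / (m - r)! * (w ^ r / (k + r)!)) - y ^ m / m ! / k !| ≤
      (2 * (y + w)) ^ m / m ! / (k + 1)! := by
  have hterm (r : ℕ) : ((m - 1).choose (r + 1) : ℝ) *
      (y ^ (m - (r + 1)) / (m - (r + 1))! * (w ^ (r + 1) / (k + (r + 1))!)) ≤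
        2 ^ m / (k + 1)! * (y ^ (m - (r + 1)) / (m - (r + 1))! * (w ^ (r + 1) / (r + 1)!)) := by
    have hchoose : ((m - 1).choose (r + 1) : ℝ) ≤ 2 ^ m := mod_cast
      (Nat.choose_le_two_pow _ _).trans (Nat.pow_le_pow_right two_pos (Nat.sub_le m 1))
    have hfact : ((k + 1)! * (r + 1)! : ℝ) ≤ (k + (r + 1))! :=
      mod_cast factorial_succ_mul_factorial_succ_le k r
    calc _ ≤ 2 ^ m * (y ^ (m - (r + 1)) / (m - (r + 1))! *
            (w ^ (r + 1) / ((k + 1)! * (r + 1)!))) := by gcongr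
      _ = _ := by field_simp
  have hmain : ((m - 1).choose 0 : ℝ) * (y ^ (m - 0) / (m - 0)! * (w ^ 0 / (k + 0)!)) =
      y ^ m / m ! / k ! := by
    simp [div_eq_mul_inv]
  have hbinom := sum_range_pow_div_factorial_mul y w m
  rw [Finset.sum_range_succ'] at hbinom
  have hhead : 0 ≤ y ^ (m - 0) / (m - 0)! * (w ^ 0 / 0 !) := by positivity
  rw [Finset.sum_range_succ', hmain, add_sub_cancel_right,
    abs_of_nonneg (Finset.sum_nonneg fun r _ ↦ by positivity)]
  calc _ ≤ 2 ^ m / (k + 1)! * ∑ r ∈ Finset.range m,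
          y ^ (m - (r + 1)) / (m - (r + 1))! * (w ^ (r + 1) / (r + 1)!) := by
        rw [Finset.mul_sum]
        exact Finset.sum_le_sum fun r _ ↦ hterm r
    _ ≤ 2 ^ m / (k + 1)! * ((y + w) ^ m / m !) := by gcongr; linarith
    _ = (2 * (y + w)) ^ m / m ! / (k + 1)! := by rw [mul_pow]; field_simp

theorem abs_poisCoef_mul_Qcoef_sub_le {lam t η₁ η₂ p q : ℝ} (hlt : 0 ≤ lam * t) (hη₁ : 0 ≤ η₁)
    (hη₂ : 0 ≤ η₂) (hp : 0 ≤ p) (hq : 0 ≤ q) (m k : ℕ) :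
    |poisCoef lam t (m + k) * Qcoef η₁ η₂ p q (m + k) k -
        exp (-(lam * t)) * (lam * t * q) ^ k *
          ((lam * t * (η₁ / (η₁ + η₂) * p)) ^ m / m ! / k !)| ≤
      exp (-(lam * t)) * (lam * t * q) ^ k *
        ((2 * (lam * t * (η₁ / (η₁ + η₂) * p) + lam * t * (η₂ / (η₁ + η₂) * q))) ^ m / m ! /
          (k + 1)!) := by
  have hscale : 0 ≤ exp (-(lam * t)) * (lam * t * q) ^ k := by positivity
  have hbound := mul_le_mul_of_nonneg_left
    (abs_sum_choose_mul_sub_le (by positivity : 0 ≤ lam * t * (η₁ / (η₁ + η₂) * p))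
      (by positivity : 0 ≤ lam * t * (η₂ / (η₁ + η₂) * q)) m k) hscale
  rwa [← abs_of_nonneg hscale, ← abs_mul, abs_of_nonneg hscale, mul_sub, ← poisCoef_mul_Qcoef]
    at hbound

theorem bCoef_isBesselCliffordPerturbation {lam t η₁ η₂ p q : ℝ} (hlt : 0 ≤ lam * t) (hη₁ : 0 ≤ η₁)
    (hη₂ : 0 ≤ η₂) (hp : 0 ≤ p) (hq : 0 ≤ q) :
    ∃ B, IsBesselCliffordPerturbation
      (exp (η₁ * lam * t * p / (η₁ + η₂) - lam * t) * (η₂ * lam * t * q)) B (η₂ * lam * t * q)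
      (bCoef lam t η₁ η₂ p q) := by
  set y := lam * t * (η₁ / (η₁ + η₂) * p) with hy
  set w := lam * t * (η₂ / (η₁ + η₂) * q) with hw
  refine ⟨exp (2 * (y + w) - lam * t) * (η₂ * lam * t * q), fun k ↦ ?_⟩
  have hsum := norm_tsum_sub_le_of_norm_sub_le
    (((hasSum_pow_div_factorial y).div_const _).mul_left _)
    (((hasSum_pow_div_factorial (2 * (y + w))).div_const _).mul_left _)
    fun m ↦ abs_poisCoef_mul_Qcoef_sub_le hlt hη₁ hη₂ hp hq m (k + 1)
  have hy' : η₁ * lam * t * p / (η₁ + η₂) = y := by rw [hy]; ring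
  have hscale : 0 ≤ η₂ ^ (k + 1) / k ! := by positivity
  calc _ = η₂ ^ (k + 1) / k ! * |∑' m, poisCoef lam t (m + (k + 1)) *
            Qcoef η₁ η₂ p q (m + (k + 1)) (k + 1) -
          exp (-(lam * t)) * (lam * t * q) ^ (k + 1) * (exp y / (k + 1)!)| := by
        rw [bCoef, hy', sub_eq_neg_add y, exp_add, ← abs_of_nonneg hscale, ← abs_mul,
          abs_of_nonneg hscale]
        congr 1
        field_simp
        ring
    _ ≤ η₂ ^ (k + 1) / k ! * (exp (-(lam * t)) * (lam * t * q) ^ (k + 1) *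
          (exp (2 * (y + w)) / (k + 1 + 1)!)) := by gcongr; exact hsum
    _ = _ := by
        rw [sub_eq_neg_add, exp_add]
        field_simp
        ring

theorem aCoef_eq_bCoef (lam t η₁ η₂ p q : ℝ) : aCoef lam t η₁ η₂ p q = bCoef lam t η₂ η₁ q p := by
  have hcoef (n k : ℕ) : Pcoef η₁ η₂ p q n k = Qcoef η₂ η₁ q p n k := by
    simp only [Pcoef, Qcoef, add_comm η₂ η₁]
    congr! 2
    ring
  funext k
  simp only [aCoef, bCoef, hcoef]

/-! ### Mellin convolution in logarithmic coordinates -/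

theorem mellinConv_comm (f g : ℝ → ℝ) {x : ℝ} (hx : 0 < x) :
    mellinConv f g x = mellinConv g f x := by
  have hscale := integral_comp_mul_left_Ioi (fun y ↦ g (x / y) * f y / y) 0 hx
  rw [mul_zero, smul_eq_mul, eq_inv_mul_iff_mul_eq₀ hx.ne'] at hscale
  rw [mellinConv, mellinConv, ← hscale, ← integral_const_mul,
    ← integral_comp_rpow_Ioi _ (by norm_num : (-1 : ℝ) ≠ 0)]
  refine setIntegral_congr_fun measurableSet_Ioi fun s (hs : 0 < s) ↦ ?_
  have hpow : s ^ (-1 - 1 : ℝ) = (s ^ 2)⁻¹ := by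
    rw [show (-1 - 1 : ℝ) = -(2 : ℕ) by norm_num, rpow_neg hs.le, rpow_natCast]
  simp only [smul_eq_mul, hpow, rpow_neg_one, div_inv_eq_mul,
    show x / (x * s) = s⁻¹ by field_simp]
  norm_num
  field_simp

/-- The function `H` in the coordinate `u = log (1 / z)`, divided by `z ^ (η - 1)`. The Mellin
convolution with `H` becomes an additive convolution with this kernel. -/
noncomputable def logKernel (η : ℝ) (H : ℝ → ℝ) (u : ℝ) : ℝ :=
  exp ((η - 1) * u) * H (exp (-u))

theorem measurable_logKernel {H : ℝ → ℝ} (hH : Measurable H) (η : ℝ) :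
    Measurable (logKernel η H) :=
  (by fun_prop : Measurable fun u ↦ exp ((η - 1) * u)).mul (hH.comp (by fun_prop))

theorem mellinConv_eq_rpow_mul_integral (f H : ℝ → ℝ) (η : ℝ) {x : ℝ} (hx : 0 < x) :
    mellinConv f H x =
      x ^ (η - 1) * ∫ y in Ioi 0, y ^ (-η) * f y * logKernel η H (log x⁻¹ + log y) := by
  rw [mellinConv_comm f H hx, mellinConv, ← integral_const_mul]
  refine setIntegral_congr_fun measurableSet_Ioi fun y (hy : 0 < y) ↦ ?_
  have hlog : log x⁻¹ + log y = -log (x / y) := by rw [log_div hx.ne' hy.ne', log_inv]; ring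
  have hpow : exp ((η - 1) * -log (x / y)) = y ^ (η - 1) / x ^ (η - 1) := by
    rw [← div_rpow hy.le hx.le, rpow_def_of_pos (by positivity), ← inv_div x y, log_inv, mul_comm]
  simp only [logKernel, hlog, neg_neg, exp_log (div_pos hx hy), hpow, rpow_sub_one hy.ne',
    rpow_neg hy.le]
  field_simp

theorem abs_mellinConv_sub_le {f H : ℝ → ℝ} {η ε E x : ℝ} (hx : 0 < x) (hH : Measurable H)
    (hf : IntegrableOn (fun y ↦ y ^ (-η) * f y) (Ioi 0))
    (hfε : IntegrableOn (fun y ↦ y ^ (-η) * f y * exp (ε * |log y|)) (Ioi 0))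
    (hE : ∀ v, |logKernel η H (log x⁻¹ + v) - logKernel η H (log x⁻¹)| ≤ E * exp (ε * |v|)) :
    |mellinConv f H x - (∫ y in Ioi 0, y ^ (-η) * f y) * logKernel η H (log x⁻¹) * x ^ (η - 1)| ≤
      E * (∫ y in Ioi 0, |y ^ (-η) * f y * exp (ε * |log y|)|) * x ^ (η - 1) := by
  set k := logKernel η H
  set w : ℝ → ℝ := fun y ↦ y ^ (-η) * f y
  have hk : Measurable k := measurable_logKernel hH η
  have hbound (y : ℝ) : ‖w y * (k (log x⁻¹ + log y) - k (log x⁻¹))‖ ≤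
      E * |w y * exp (ε * |log y|)| := by
    rw [norm_mul, norm_eq_abs, norm_eq_abs, abs_mul (w y), abs_exp, mul_left_comm]
    gcongr
    exact hE _
  have hdiff : IntegrableOn (fun y ↦ w y * (k (log x⁻¹ + log y) - k (log x⁻¹))) (Ioi 0) :=
    (hfε.abs.const_mul E).mono'
      (hf.aestronglyMeasurable.mul (by fun_prop : Measurable _).aestronglyMeasurable)
      (ae_of_all _ hbound)
  have hsplit : mellinConv f H x - (∫ y in Ioi 0, w y) * k (log x⁻¹) * x ^ (η - 1) =
      (∫ y in Ioi 0, w y * (k (log x⁻¹ + log y) - k (log x⁻¹))) * x ^ (η - 1) := by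
    have hconst := hf.mul_const (k (log x⁻¹))
    rw [mellinConv_eq_rpow_mul_integral f H η hx, ← integral_mul_const, mul_comm (x ^ _),
      ← sub_mul, ← integral_sub _ hconst]
    · simp only [mul_sub]
      rfl
    · exact (hdiff.add hconst).congr (ae_of_all _ fun y ↦ by simp [w]; ring)
  have hx' : 0 < x ^ (η - 1) := rpow_pos_of_pos hx _
  rw [hsplit, abs_mul, abs_of_pos hx', ← integral_const_mul]
  gcongr
  exact norm_integral_le_of_norm_le (hfε.abs.const_mul E) (ae_of_all _ hbound)

theorem logKernel_Hfun_of_nonneg (lam t η₁ η₂ p q : ℝ) {u : ℝ} (hu : 0 ≤ u) :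
    logKernel η₂ (Hfun lam t η₁ η₂ p q) u = G2m lam t η₁ η₂ p q u := by
  have h1 : ¬ 1 < exp (-u) := by simpa using hu
  have hpow : exp ((η₂ - 1) * u) * exp (-u * (η₂ - 1)) = 1 := by rw [← exp_add]; ring_nf; simp
  simp only [logKernel, Hfun, h1, if_false, H2fun, ← exp_neg, neg_neg, log_exp, ← exp_mul]
  rw [mul_left_comm, hpow, mul_one]

theorem logKernel_Hfun_of_neg (lam t η₁ η₂ p q : ℝ) {u : ℝ} (hu : u < 0) :
    logKernel η₂ (Hfun lam t η₁ η₂ p q) u = G1 lam t η₁ η₂ p q (-u) * exp ((η₁ + η₂) * u) := by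
  have h1 : 1 < exp (-u) := by simpa using hu
  simp only [logKernel, Hfun, h1, if_true, H1fun, log_exp, ← exp_mul]
  rw [mul_left_comm, ← exp_add]
  ring_nf

section JumpCoefficients

variable {lam t η₁ η₂ p q : ℝ}

theorem measurable_Hfun (hlt : 0 ≤ lam * t) (hη₁ : 0 ≤ η₁) (hη₂ : 0 ≤ η₂) (hp : 0 ≤ p)
    (hq : 0 ≤ q) : Measurable (Hfun lam t η₁ η₂ p q) := by
  obtain ⟨_, ha⟩ := bCoef_isBesselCliffordPerturbation hlt hη₂ hη₁ hq hp
  obtain ⟨_, hb⟩ := bCoef_isBesselCliffordPerturbation hlt hη₁ hη₂ hp hq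
  rw [← aCoef_eq_bCoef] at ha
  have hG1 := ha.measurable_tsum (by rw [mul_assoc η₁]; positivity)
  have hG2 := hb.measurable_tsum (by rw [mul_assoc η₂]; positivity)
  exact .ite measurableSet_Ioi ((hG1.comp measurable_log).mul (by fun_prop))
    ((hG2.comp (measurable_log.comp measurable_inv)).mul (by fun_prop))

theorem exists_abs_logKernel_Hfun_le (hlt : 0 ≤ lam * t) (hη₁ : 0 < η₁) (hη₂ : 0 ≤ η₂)
    (hp : 0 ≤ p) (hq : 0 ≤ q) :
    ∃ M, ∀ u, u < 0 → |logKernel η₂ (Hfun lam t η₁ η₂ p q) u| ≤ M := by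
  obtain ⟨_, ha⟩ := bCoef_isBesselCliffordPerturbation hlt hη₂ hη₁.le hq hp
  rw [← aCoef_eq_bCoef] at ha
  obtain ⟨M, hM⟩ := ha.exists_abs_tsum_le_exp (by rw [mul_assoc η₁]; positivity) hη₁
  have hM0 : 0 ≤ M := by simpa using (abs_nonneg _).trans (hM 0)
  refine ⟨M, fun u hu ↦ ?_⟩
  rw [logKernel_Hfun_of_neg _ _ _ _ _ _ hu, abs_mul, abs_exp]
  calc |G1 lam t η₁ η₂ p q (-u)| * exp ((η₁ + η₂) * u)
      ≤ M * exp (η₁ * |-u|) * exp ((η₁ + η₂) * u) := by gcongr; exact hM (-u)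
    _ = M * exp (η₂ * u) := by
        rw [abs_neg, abs_of_neg hu, mul_assoc, ← exp_add]
        ring_nf
    _ ≤ M :=
        mul_le_of_le_one_right hM0 (exp_le_one_iff.2 (mul_nonpos_of_nonneg_of_nonpos hη₂ hu.le))

theorem exists_abs_mellinConv_Hfun_sub_le {U : ℝ → ℝ} {ε : ℝ} (hlt : 0 < lam * t) (hη₁ : 0 < η₁)
    (hη₂ : 0 < η₂) (hp : 0 ≤ p) (hq : 0 < q) (hε : 0 < ε)
    (hU : IntegrableOn (fun y ↦ y ^ (-η₂) * U y) (Ioi 0))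
    (hUε : IntegrableOn (fun y ↦ y ^ (-η₂) * U y * exp (ε * |log y|)) (Ioi 0)) :
    ∃ K, ∀ x, 0 < x → 1 ≤ log x⁻¹ →
      |mellinConv U (Hfun lam t η₁ η₂ p q) x -
          (∫ y in Ioi 0, y ^ (-η₂) * U y) *
            (exp (η₁ * lam * t * p / (η₁ + η₂) - lam * t) * (η₂ * lam * t * q) *
              besselCliffordLead (η₂ * lam * t * q * log x⁻¹)) * x ^ (η₂ - 1)| ≤
        K * (besselCliffordLead (η₂ * lam * t * q * log x⁻¹) / √(log x⁻¹) * x ^ (η₂ - 1)) := by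
  obtain ⟨_, hb⟩ := bCoef_isBesselCliffordPerturbation hlt.le hη₁.le hη₂.le hp hq.le
  have hc : 0 < η₂ * lam * t * q := by rw [mul_assoc η₂]; positivity
  obtain ⟨M, hM⟩ := exists_abs_logKernel_Hfun_le hlt.le hη₁ hη₂.le hp hq.le
  obtain ⟨K, hK⟩ := hb.exists_abs_tsum_sub_lead_le hc
  obtain ⟨E, hE⟩ := hb.exists_abs_add_sub_le hc hε
    (fun u hu ↦ logKernel_Hfun_of_nonneg lam t η₁ η₂ p q hu) hM
  have hH := measurable_Hfun hlt.le hη₁.le hη₂.le hp hq.le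
  generalize exp (η₁ * lam * t * p / (η₁ + η₂) - lam * t) * (η₂ * lam * t * q) = A at hK ⊢
  generalize η₂ * lam * t * q = c at hK hE ⊢
  set m := ∫ y in Ioi 0, y ^ (-η₂) * U y
  set mε := ∫ y in Ioi 0, |y ^ (-η₂) * U y * exp (ε * |log y|)|
  refine ⟨E * mε + |m| * K, fun x hx hL ↦ ?_⟩
  set L := log x⁻¹
  set k := logKernel η₂ (Hfun lam t η₁ η₂ p q)
  have hx' : 0 < x ^ (η₂ - 1) := rpow_pos_of_pos hx _
  have hkL : |k L - A * besselCliffordLead (c * L)| ≤ K * (besselCliffordLead (c * L) / √L) := by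
    simpa only [k, logKernel_Hfun_of_nonneg lam t η₁ η₂ p q (zero_le_one.trans hL), G2m]
      using hK L hL
  have hconv := abs_mellinConv_sub_le hx hH hU hUε (hE L hL)
  calc _ ≤ |mellinConv U (Hfun lam t η₁ η₂ p q) x - m * k L * x ^ (η₂ - 1)| +
          |m * k L * x ^ (η₂ - 1) - m * (A * besselCliffordLead (c * L)) * x ^ (η₂ - 1)| :=
        abs_sub_le _ _ _
    _ ≤ E * (besselCliffordLead (c * L) / √L) * mε * x ^ (η₂ - 1) +
          |m| * (K * (besselCliffordLead (c * L) / √L)) * x ^ (η₂ - 1) := by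
        rw [← sub_mul, ← mul_sub, abs_mul (m * _), abs_mul m, abs_of_pos hx']
        gcongr
    _ = _ := by ring

end JumpCoefficients

/-! ### Moments and behaviour at zero -/

theorem exp_mul_abs_log_le (ε : ℝ) {y : ℝ} (hy : 0 < y) :
    exp (ε * |log y|) ≤ y ^ ε + y ^ (-ε) := by
  rw [rpow_def_of_pos hy, rpow_def_of_pos hy]
  obtain ⟨h, -⟩ | ⟨h, -⟩ := abs_cases (log y)
  · rw [h, mul_comm]
    linarith [exp_pos (log y * -ε)]
  · rw [h, mul_neg, ← neg_mul, mul_comm]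
    linarith [exp_pos (log y * ε)]

section Moments

variable {U : ℝ → ℝ} {α σ : ℝ}

theorem integrableOn_rpow_mul_of_isBigO_rpow (hU : IntegrableOn U (Ioi 0))
    (hUα : U =O[𝓝[>] 0] fun x ↦ x ^ α) (hσ : σ ≤ 0) (hσα : -1 < σ + α) :
    IntegrableOn (fun x ↦ x ^ σ * U x) (Ioi 0) := by
  obtain ⟨c, hc, hnear⟩ := mellin_convergent_zero_of_isBigO (b := -α) (s := σ + 1)
    hU.aestronglyMeasurable (by simpa only [neg_neg] using hUα) (by linarith)
  rw [add_sub_cancel_right] at hnear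
  rw [← Ioc_union_Ioi_eq_Ioi hc.le]
  have hfar := hU.mono_set (Ioi_subset_Ioi hc.le)
  refine hnear.union ((hfar.norm.const_mul (c ^ σ)).mono'
    ((by fun_prop : Measurable _).aestronglyMeasurable.mul hfar.aestronglyMeasurable)
    ((ae_restrict_iff' measurableSet_Ioi).2 (ae_of_all _ fun x (hx : c < x) ↦ ?_)))
  rw [norm_mul, norm_of_nonneg (rpow_nonneg (hc.trans hx).le _)]
  exact mul_le_mul_of_nonneg_right (rpow_le_rpow_of_nonpos hc hx.le hσ) (norm_nonneg _)

theorem integrableOn_rpow_mul_mul_exp_abs_log {ε : ℝ} (hU : IntegrableOn U (Ioi 0))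
    (hUα : U =O[𝓝[>] 0] fun x ↦ x ^ α) (hε : 0 ≤ ε) (hσ : σ + ε ≤ 0) (hσα : -1 < σ - ε + α) :
    IntegrableOn (fun x ↦ x ^ σ * U x * exp (ε * |log x|)) (Ioi 0) := by
  have hplus := integrableOn_rpow_mul_of_isBigO_rpow hU hUα hσ (by linarith)
  have hminus := integrableOn_rpow_mul_of_isBigO_rpow hU hUα (by linarith : σ - ε ≤ 0) hσα
  refine (hplus.norm.add hminus.norm).mono'
    (((by fun_prop : Measurable _).aestronglyMeasurable.mul hU.aestronglyMeasurable).mul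
      (by fun_prop : Measurable _).aestronglyMeasurable)
    ((ae_restrict_iff' measurableSet_Ioi).2 (ae_of_all _ fun x (hx : 0 < x) ↦ ?_))
  have hxσ : 0 < x ^ σ := rpow_pos_of_pos hx σ
  simp only [Pi.add_apply, norm_mul, norm_eq_abs, abs_exp, abs_of_pos (rpow_pos_of_pos hx _)]
  calc x ^ σ * |U x| * exp (ε * |log x|) ≤ x ^ σ * |U x| * (x ^ ε + x ^ (-ε)) := by
        gcongr
        exact exp_mul_abs_log_le ε hx
    _ = x ^ (σ + ε) * |U x| + x ^ (σ - ε) * |U x| := by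
        rw [rpow_add hx, sub_eq_add_neg, rpow_add hx]
        ring

theorem setIntegral_rpow_mul_pos (hU₀ : ∀ x, 0 < x → 0 ≤ U x) (hU : 0 < ∫ x in Ioi 0, U x)
    (hUσ : IntegrableOn (fun x ↦ x ^ σ * U x) (Ioi 0)) : 0 < ∫ x in Ioi 0, x ^ σ * U x := by
  have hae : ∀ᵐ x : ℝ ∂volume.restrict (Ioi 0), 0 < x := ae_restrict_mem measurableSet_Ioi
  rw [setIntegral_pos_iff_support_of_nonneg_ae (hae.mono fun x hx ↦ hU₀ x hx)
    (Integrable.of_integral_ne_zero hU.ne')] at hU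
  rw [setIntegral_pos_iff_support_of_nonneg_ae
    (hae.mono fun x hx ↦ mul_nonneg (rpow_nonneg hx.le σ) (hU₀ x hx)) hUσ]
  refine hU.trans_le (measure_mono fun x hx ↦ ⟨?_, hx.2⟩)
  exact mul_ne_zero (rpow_pos_of_pos hx.2 σ).ne' hx.1

end Moments

theorem tendsto_log_inv_nhdsGT_zero : Tendsto (fun x : ℝ ↦ log x⁻¹) (𝓝[>] 0) atTop :=
  tendsto_log_atTop.comp tendsto_inv_nhdsGT_zero

theorem exp_mul_sqrt_isBigO_exp_mul (s : ℝ) {δ : ℝ} (hδ : 0 < δ) :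
    (fun L ↦ exp (s * √L)) =O[atTop] fun L ↦ exp (δ * L) := by
  refine isBigO_exp_comp_exp_comp.2 ⟨s ^ 2 / (4 * δ), eventually_map.2 ?_⟩
  filter_upwards [eventually_ge_atTop 0] with L hL
  have h := two_mul_sqrt_mul_le_add (by positivity : 0 ≤ s ^ 2 / (4 * δ))
    (by positivity : 0 ≤ δ * L)
  rw [show s ^ 2 / (4 * δ) * (δ * L) = (s / 2) ^ 2 * L by field_simp; ring,
    sqrt_mul (sq_nonneg _), sqrt_sq_eq_abs] at h
  have hs : s / 2 * √L ≤ |s / 2| * √L := by gcongr; exact le_abs_self _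
  simp only [Pi.sub_apply]
  linarith

theorem rpow_mul_exp_sqrt_log_mul_log_rpow_isBigO (s κ : ℝ) {a α : ℝ} (hα : α < a) :
    (fun x ↦ x ^ a * exp (s * √(log x⁻¹)) * log x⁻¹ ^ κ) =O[𝓝[>] 0] fun x ↦ x ^ α := by
  have hδ : 0 < (a - α) / 2 := by linarith
  have hexp := (exp_mul_sqrt_isBigO_exp_mul s hδ).comp_tendsto tendsto_log_inv_nhdsGT_zero
  have hpow := (isLittleO_rpow_exp_pos_mul_atTop κ hδ).isBigO.comp_tendsto
    tendsto_log_inv_nhdsGT_zero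
  refine (((isBigO_refl (fun x : ℝ ↦ x ^ a) (𝓝[>] 0)).mul hexp).mul hpow).congr' .rfl ?_
  filter_upwards [self_mem_nhdsWithin] with x (hx : 0 < x)
  simp only [Function.comp_apply, log_inv, rpow_def_of_pos hx, ← exp_add]
  ring_nf

theorem isBigO_rpow_of_isBigO_sub {U : ℝ → ℝ} {C s a κ α : ℝ} (hα : α < a)
    (hU : (fun x ↦ U x - C * x ^ a * exp (s * √(log x⁻¹)) * log x⁻¹ ^ κ) =O[𝓝[>] 0]
      fun x ↦ C * x ^ a * exp (s * √(log x⁻¹)) * log x⁻¹ ^ κ * log x⁻¹ ^ (-(1 : ℝ) / 2)) :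
    U =O[𝓝[>] 0] fun x ↦ x ^ α := by
  have hlead : (fun x ↦ C * x ^ a * exp (s * √(log x⁻¹)) * log x⁻¹ ^ κ) =O[𝓝[>] 0]
      fun x ↦ x ^ α := by
    simpa only [mul_assoc] using
      (rpow_mul_exp_sqrt_log_mul_log_rpow_isBigO s κ hα).const_mul_left C
  have hlog : (fun x : ℝ ↦ log x⁻¹ ^ (-(1 : ℝ) / 2)) =O[𝓝[>] 0] fun _ ↦ (1 : ℝ) := by
    have h := (tendsto_rpow_neg_atTop one_half_pos).comp tendsto_log_inv_nhdsGT_zero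
    simpa only [neg_div, Function.comp_def] using h.isBigO_one ℝ
  have herr := hU.trans ((isBigO_refl _ _).mul hlog)
  simp only [mul_one] at herr
  simpa only [sub_add_cancel] using (herr.trans hlead).add hlead

/-! ### The density at zero -/

theorem rpow_neg_five_quarters_isBigO_lead_div_sqrt {c : ℝ} (hc : 0 < c) :
    (fun L : ℝ ↦ L ^ (-(5 : ℝ) / 4)) =O[atTop] fun L ↦ besselCliffordLead (c * L) / √L := by
  refine .of_bound (2 * √π / c ^ (-(3 : ℝ) / 4)) ?_
  filter_upwards [eventually_gt_atTop 0] with L hL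
  have hlead := besselCliffordLead_pos (by positivity : 0 < c * L)
  have hpow : L ^ (-(5 : ℝ) / 4) = L ^ (-(3 : ℝ) / 4) / √L := by
    rw [sqrt_eq_rpow, ← rpow_sub hL]
    norm_num
  rw [norm_of_nonneg (by positivity), norm_of_nonneg (by positivity), hpow, besselCliffordLead,
    mul_rpow hc.le hL.le]
  calc L ^ (-(3 : ℝ) / 4) / √L ≤ L ^ (-(3 : ℝ) / 4) / √L * exp (2 * √(c * L)) :=
        le_mul_of_one_le_right (by positivity) (one_le_exp (by positivity))
    _ = _ := by field_simp

theorem rpow_isBigO_lead_div_sqrt_mul_rpow {c α σ : ℝ} (hc : 0 < c) (hα : σ < α) :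
    (fun x : ℝ ↦ x ^ α) =O[𝓝[>] 0]
      fun x ↦ besselCliffordLead (c * log x⁻¹) / √(log x⁻¹) * x ^ σ := by
  have hexp := ((isLittleO_exp_neg_mul_rpow_atTop (sub_pos.2 hα) (-(5 : ℝ) / 4)).isBigO.trans
    (rpow_neg_five_quarters_isBigO_lead_div_sqrt hc)).comp_tendsto tendsto_log_inv_nhdsGT_zero
  refine (hexp.mul (isBigO_refl (fun x : ℝ ↦ x ^ σ) _)).congr' ?_ .rfl
  filter_upwards [self_mem_nhdsWithin] with x (hx : 0 < x)
  simp only [Function.comp_apply, log_inv, rpow_def_of_pos hx, ← exp_add]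
  ring_nf

section Density

variable {lam t η₁ η₂ p q α : ℝ} {U : ℝ → ℝ}

theorem mellinConv_Hfun_sub_isBigO (hlt : 0 < lam * t) (hη₁ : 0 < η₁) (hη₂ : 0 < η₂) (hp : 0 ≤ p)
    (hq : 0 < q) (hU : IntegrableOn U (Ioi 0)) (hα : η₂ - 1 < α)
    (hUα : U =O[𝓝[>] 0] fun x ↦ x ^ α) :
    (fun x ↦ mellinConv U (Hfun lam t η₁ η₂ p q) x -
        (∫ y in Ioi 0, y ^ (-η₂) * U y) *
          (exp (η₁ * lam * t * p / (η₁ + η₂) - lam * t) * (η₂ * lam * t * q) *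
            besselCliffordLead (η₂ * lam * t * q * log x⁻¹)) * x ^ (η₂ - 1))
      =O[𝓝[>] 0] fun x ↦
        besselCliffordLead (η₂ * lam * t * q * log x⁻¹) / √(log x⁻¹) * x ^ (η₂ - 1) := by
  obtain ⟨ε, hε, hεα⟩ := exists_between (lt_min hη₂ (by linarith : 0 < α - (η₂ - 1)))
  obtain ⟨hεη, hεα⟩ := lt_min_iff.1 hεα
  obtain ⟨K, hK⟩ := exists_abs_mellinConv_Hfun_sub_le hlt hη₁ hη₂ hp hq hε
    (integrableOn_rpow_mul_of_isBigO_rpow hU hUα (by linarith) (by linarith))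
    (integrableOn_rpow_mul_mul_exp_abs_log hU hUα hε.le (by linarith) (by linarith))
  refine .of_bound K ?_
  filter_upwards [self_mem_nhdsWithin,
    tendsto_log_inv_nhdsGT_zero.eventually (eventually_ge_atTop 1)] with x (hx : 0 < x) hL
  have hlead := besselCliffordLead_pos (by positivity : 0 < η₂ * (lam * t) * q * log x⁻¹)
  rw [← mul_assoc η₂] at hlead
  rw [norm_of_nonneg (r := _ * _) (by positivity)]
  exact hK x hx hL

theorem jumpDensity_sub_isBigO (hlt : 0 < lam * t) (hη₁ : 0 < η₁) (hη₂ : 0 < η₂) (hp : 0 ≤ p)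
    (hq : 0 < q) (hU : IntegrableOn U (Ioi 0)) (hα : η₂ - 1 < α)
    (hUα : U =O[𝓝[>] 0] fun x ↦ x ^ α) :
    (fun x ↦ exp (-(lam * t)) * U x + mellinConv U (Hfun lam t η₁ η₂ p q) x -
        (∫ y in Ioi 0, y ^ (-η₂) * U y) *
          (exp (η₁ * lam * t * p / (η₁ + η₂) - lam * t) * (η₂ * lam * t * q) *
            besselCliffordLead (η₂ * lam * t * q * log x⁻¹)) * x ^ (η₂ - 1))
      =O[𝓝[>] 0] fun x ↦
        besselCliffordLead (η₂ * lam * t * q * log x⁻¹) / √(log x⁻¹) * x ^ (η₂ - 1) := by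
  have hc : 0 < η₂ * lam * t * q := by rw [mul_assoc η₂]; positivity
  have hdiffusion := (hUα.const_mul_left (exp (-(lam * t)))).trans
    (rpow_isBigO_lead_div_sqrt_mul_rpow hc hα)
  simpa only [add_sub_assoc] using
    hdiffusion.add (mellinConv_Hfun_sub_isBigO hlt hη₁ hη₂ hp hq hU hα hUα)

end Density

theorem mul_besselCliffordLead_mul {c L : ℝ} (hc : 0 < c) (hL : 0 < L) :
    c * besselCliffordLead (c * L) =
      1 / (2 * √π) * c ^ ((1 : ℝ) / 4) * L ^ (-(3 : ℝ) / 4) * exp (2 * √c * √L) := by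
  have hpow : c ^ ((1 : ℝ) / 4) = c * c ^ (-(3 : ℝ) / 4) := by
    rw [← rpow_one_add' hc.le (by norm_num)]
    norm_num
  rw [besselCliffordLead, mul_rpow hc.le hL.le, sqrt_mul hc.le, hpow, mul_assoc 2]
  ring

theorem density_asymptotics_jump_dominates_at_zero_general
    {t lam η₁ η₂ p q α : ℝ} {U : ℝ → ℝ} (hlt : 0 < lam * t) (hη₁ : 0 < η₁) (hη₂ : 0 < η₂)
    (hp : 0 ≤ p) (hq : 0 < q) (hU : IntegrableOn U (Ioi 0)) (hα : η₂ - 1 < α)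
    (hUα : U =O[𝓝[>] 0] fun x ↦ x ^ α) (hm : (∫ y in Ioi 0, y ^ (-η₂) * U y) ≠ 0) :
    IntegrableOn (fun x ↦ x ^ (-η₂) * U x) (Ioi 0) ∧
    (fun x ↦ (exp (-(lam * t)) * U x + mellinConv U (Hfun lam t η₁ η₂ p q) x) -
        1 / (2 * √π) * (∫ y in Ioi 0, y ^ (-η₂) * U y) * (η₂ * lam * t * q) ^ ((1 : ℝ) / 4) *
          exp (η₁ * lam * t * p / (η₁ + η₂) - lam * t) * log x⁻¹ ^ (-(3 : ℝ) / 4) *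
          exp (2 * √(η₂ * lam * t * q) * √(log x⁻¹)) * x ^ (η₂ - 1))
      =O[𝓝[>] 0] fun x ↦
        1 / (2 * √π) * (∫ y in Ioi 0, y ^ (-η₂) * U y) * (η₂ * lam * t * q) ^ ((1 : ℝ) / 4) *
          exp (η₁ * lam * t * p / (η₁ + η₂) - lam * t) * log x⁻¹ ^ (-(3 : ℝ) / 4) *
          exp (2 * √(η₂ * lam * t * q) * √(log x⁻¹)) * x ^ (η₂ - 1) *
          log x⁻¹ ^ (-(1 : ℝ) / 2) := by
  have hc : 0 < η₂ * lam * t * q := by rw [mul_assoc η₂]; positivity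
  have hD := jumpDensity_sub_isBigO hlt hη₁ hη₂ hp hq hU hα hUα
  refine ⟨integrableOn_rpow_mul_of_isBigO_rpow hU hUα (by linarith) (by linarith), ?_⟩
  generalize η₂ * lam * t * q = c at hc hD ⊢
  generalize (∫ y in Ioi 0, y ^ (-η₂) * U y) = m at hm hD ⊢
  have hC := (exp_pos (η₁ * lam * t * p / (η₁ + η₂) - lam * t)).ne'
  generalize exp (η₁ * lam * t * p / (η₁ + η₂) - lam * t) = C at hC hD ⊢
  have hlog := tendsto_log_inv_nhdsGT_zero.eventually (eventually_gt_atTop 0)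
  have hlead (L X : ℝ) (hL : 0 < L) : 1 / (2 * √π) * m * c ^ ((1 : ℝ) / 4) * C *
      L ^ (-(3 : ℝ) / 4) * exp (2 * √c * √L) * X =
        m * C * c * (besselCliffordLead (c * L) * X) := by
    rw [mul_assoc _ c, ← mul_assoc c, mul_besselCliffordLead_mul hc hL]
    ring
  refine (hD.trans ((isBigO_refl _ _).const_mul_right (by positivity : m * C * c ≠ 0))).congr' ?_ ?_
  · filter_upwards [hlog] with x hL
    rw [hlead _ _ hL]
    ring
  · filter_upwards [hlog] with x hL
    rw [hlead _ _ hL, neg_div, rpow_neg hL.le, ← sqrt_eq_rpow]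
    ring

end

/-- Theorem: density asymptotics at zero when the jump part
dominates, `Ã₃ > η₂ − 1`.  Let `U` be a probability density on `(0,∞)` with the
Heston-type asymptotics at infinity and zero, and let
`D(x) = e^{−λt} U(x) + (U ⋆_M H(t,·))(x)`.  Then the moment `m_{−η₂}(U)` is finite and
`D(x) = (1/(2√π)) m_{−η₂}(U) (η₂λtq)^{1/4} exp{η₁λtp/(η₁+η₂) − λt} (log(1/x))^{−3/4}`
`· exp{2√(η₂λtq) √(log(1/x))} x^{η₂−1} (1 + O((log(1/x))^{−1/2}))` as `x → 0`. -/
theorem density_asymptotics_jump_dominates_at_zero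
    (t lam η₁ η₂ p q : ℝ) (U : ℝ → ℝ) (B₁ Bt₁ A₂ At₂ A₃ At₃ κ : ℝ)
    (ht : 0 < t) (hlam : 0 < lam) (hη₁ : 1 < η₁) (hη₂ : 0 < η₂)
    (hp : 0 < p) (hq : 0 < q) (hpq : p + q = 1)
    (hB₁ : 0 < B₁) (hBt₁ : 0 < Bt₁) (hA₃ : 2 < A₃) (hAt₃ : η₂ - 1 < At₃)
    (hU_meas : Measurable U) (hU_nonneg : ∀ x, 0 ≤ U x)
    (hU_prob : (∫ x in Set.Ioi (0:ℝ), U x) = 1)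
    -- `U(x) = B₁ x^{−A₃} exp{A₂√(log x)} (log x)^κ (1 + O((log x)^{−1/2}))` as `x → ∞`
    (hU_infty : (fun x => U x -
        B₁ * x ^ (-A₃) * Real.exp (A₂ * Real.sqrt (Real.log x)) * (Real.log x) ^ κ)
      =O[atTop] (fun x =>
        B₁ * x ^ (-A₃) * Real.exp (A₂ * Real.sqrt (Real.log x)) * (Real.log x) ^ κ *
          (Real.log x) ^ (-(1:ℝ)/2)))
    -- `U(x) = B̃₁ x^{Ã₃} exp{Ã₂√(log(1/x))} (log(1/x))^κ (1 + O((log(1/x))^{−1/2}))` as `x → 0`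
    (hU_zero : (fun x => U x -
        Bt₁ * x ^ At₃ * Real.exp (At₂ * Real.sqrt (Real.log x⁻¹)) * (Real.log x⁻¹) ^ κ)
      =O[nhdsWithin 0 (Set.Ioi 0)] (fun x =>
        Bt₁ * x ^ At₃ * Real.exp (At₂ * Real.sqrt (Real.log x⁻¹)) * (Real.log x⁻¹) ^ κ *
          (Real.log x⁻¹) ^ (-(1:ℝ)/2))) :
    MeasureTheory.IntegrableOn (fun x => x ^ (-η₂) * U x) (Set.Ioi 0) ∧
    (fun x => (Real.exp (-(lam * t)) * U x +
        mellinConv U (Hfun lam t η₁ η₂ p q) x) -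
        1 / (2 * Real.sqrt Real.pi) * (∫ y in Set.Ioi (0:ℝ), y ^ (-η₂) * U y) *
          (η₂ * lam * t * q) ^ ((1:ℝ)/4) *
          Real.exp (η₁ * lam * t * p / (η₁ + η₂) - lam * t) *
          (Real.log x⁻¹) ^ (-(3:ℝ)/4) *
          Real.exp (2 * Real.sqrt (η₂ * lam * t * q) * Real.sqrt (Real.log x⁻¹)) *
          x ^ (η₂ - 1))
      =O[nhdsWithin 0 (Set.Ioi 0)]
      (fun x =>
        1 / (2 * Real.sqrt Real.pi) * (∫ y in Set.Ioi (0:ℝ), y ^ (-η₂) * U y) *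
          (η₂ * lam * t * q) ^ ((1:ℝ)/4) *
          Real.exp (η₁ * lam * t * p / (η₁ + η₂) - lam * t) *
          (Real.log x⁻¹) ^ (-(3:ℝ)/4) *
          Real.exp (2 * Real.sqrt (η₂ * lam * t * q) * Real.sqrt (Real.log x⁻¹)) *
          x ^ (η₂ - 1) * (Real.log x⁻¹) ^ (-(1:ℝ)/2)) := by
  have hU : IntegrableOn U (Set.Ioi 0) :=
    Integrable.of_integral_ne_zero (by rw [hU_prob]; exact one_ne_zero)
  obtain ⟨α, hα, hαAt⟩ := exists_between hAt₃
  have hUα := isBigO_rpow_of_isBigO_sub hαAt hU_zero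
  have hmoment := setIntegral_rpow_mul_pos (fun x _ ↦ hU_nonneg x)
    (by rw [hU_prob]; exact one_pos)
    (integrableOn_rpow_mul_of_isBigO_rpow hU hUα (by linarith : -η₂ ≤ 0) (by linarith))
  exact density_asymptotics_jump_dominates_at_zero_general (mul_pos hlam ht)
    (one_pos.trans hη₁) hη₂ hp.le hq hU hα hUα hmoment.ne'
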